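/- Let 1<p<∞ and let Ω ⊆ ℝ^N be an open set. Then the embedding W^{1,p}_0(Ω) ↪ L^p(Ω) is compact if and only if E_p(Ω) = +∞. -/

import Mathlib

open MeasureTheory Filter Topology Metric Set ENNReal
open scoped RealInnerProductSpace

noncomputable section

/-- Euclidean space `ℝ^N`. -/
abbrev EucN (N : ℕ) := EuclideanSpace ℝ (Fin N)

/-- A test function on an open set `Ω ⊆ ℝ^N`: smooth, with compact support contained in `Ω`. -/
def IsTestFun {N : ℕ} (Ω : Set (EucN N)) (φ : EucN N → ℝ) : Prop :=
  ContDiff ℝ (⊤ : ℕ∞) φ ∧ HasCompactSupport φ ∧ tsupport φ ⊆ Ω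

/-- Pairs `(u, g)` in `L^q × L^q`, thought of as a function together with its (weak) gradient. -/
abbrev SobPair (N : ℕ) (q : ℝ≥0∞) :=
  Lp ℝ q (volume : Measure (EucN N)) × Lp (EucN N) q (volume : Measure (EucN N))

/-- A pair given (a.e.) by a test function and its gradient. -/
def IsTestPair {N : ℕ} (q : ℝ≥0∞) (Ω : Set (EucN N)) (w : SobPair N q) : Prop :=
  ∃ ψ : EucN N → ℝ, IsTestFun Ω ψ ∧ (⇑w.1 =ᵐ[volume] ψ) ∧
    (⇑w.2 =ᵐ[volume] fun x => gradient ψ x)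

theorem fact_one_le_ofReal {p : ℝ} (hp : 1 ≤ p) : Fact (1 ≤ ENNReal.ofReal p) :=
  ⟨ENNReal.one_le_ofReal.mpr hp⟩

/-- The Sobolev space `W^{1,p}_0(Ω)`, realized as the closure in `L^p × L^p` of the set of
pairs (test function, its gradient). -/
def W10 (N : ℕ) (p : ℝ) (hp : 1 ≤ p) (Ω : Set (EucN N)) :
    Set (SobPair N (ENNReal.ofReal p)) :=
  letI := fact_one_le_ofReal hp
  closure {w | IsTestPair (ENNReal.ofReal p) Ω w}

/-- The first eigenvalue `λ_{1,p}(Ω)` (as an extended real, `∞` if there are no admissible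
functions). -/
def lambda1p (N : ℕ) (p : ℝ) (hp : 1 ≤ p) (Ω : Set (EucN N)) : ℝ≥0∞ :=
  sInf {t | ∃ w ∈ W10 N p hp Ω, (∫ x, |w.1 x| ^ p) = 1 ∧
    t = ENNReal.ofReal (∫ x, ‖w.2 x‖ ^ p)}

/-- The `L^p` Poincaré constant "at infinity" `E_p(Ω)`. -/
def Einfty (N : ℕ) (p : ℝ) (hp : 1 ≤ p) (Ω : Set (EucN N)) : ℝ≥0∞ :=
  ⨆ R ∈ Set.Ioi (0 : ℝ), lambda1p N p hp (Ω \ closure (ball (0 : EucN N) R))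

/-- There is a continuous odd map from `A` to the unit sphere `S^{j-1} ⊆ ℝ^j`. -/
def HasOddMapToSphere {Z : Type*} [NormedAddCommGroup Z] (A : Set Z) (j : ℕ) : Prop :=
  ∃ f : Z → EuclideanSpace ℝ (Fin j),
    ContinuousOn f A ∧ (∀ x ∈ A, ‖f x‖ = 1) ∧ ∀ x ∈ A, f (-x) = -f x

/-- The Krasnosel'skii genus of `A` is at least `k`. -/
def genusGE {Z : Type*} [NormedAddCommGroup Z] (A : Set Z) (k : ℕ) : Prop :=
  ∀ j : ℕ, HasOddMapToSphere A j → k ≤ j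

/-- The Krasnosel'skii genus of `A`, valued in `ℕ∞`. -/
def genus {Z : Type*} [NormedAddCommGroup Z] (A : Set Z) : ℕ∞ :=
  sInf {k : ℕ∞ | ∃ j : ℕ, (j : ℕ∞) = k ∧ HasOddMapToSphere A j}

/-- The class `𝒲_{k,p}(Ω)` of compact symmetric subsets of `S_p(Ω) ∩ W^{1,p}_0(Ω)` with
genus at least `k`. -/
def SobClass (N : ℕ) (p : ℝ) (hp : 1 ≤ p) (Ω : Set (EucN N)) (k : ℕ) :
    Set (Set (SobPair N (ENNReal.ofReal p))) :=
  letI := fact_one_le_ofReal hp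
  {K | K ⊆ W10 N p hp Ω ∧ (∀ w ∈ K, (∫ x, |w.1 x| ^ p) = 1) ∧
       (∀ w ∈ K, -w ∈ K) ∧ IsCompact K ∧ genusGE K k}

/-- The `k`-th minmax Ljusternik–Schnirelmann value `λ_{k,p}^{LS}(Ω)`. -/
def lambdaLS (N : ℕ) (p : ℝ) (hp : 1 ≤ p) (Ω : Set (EucN N)) (k : ℕ) : ℝ≥0∞ :=
  ⨅ K ∈ SobClass N p hp Ω k, ⨆ w ∈ K, ENNReal.ofReal (∫ x, ‖w.2 x‖ ^ p)

/-- `w = (u, ∇u)` is an eigenfunction of the Dirichlet `p`-Laplacian on `Ω` associated to the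
eigenvalue `lam`. -/
def IsEigenfunction (N : ℕ) (p : ℝ) (hp : 1 ≤ p) (Ω : Set (EucN N)) (lam : ℝ)
    (w : SobPair N (ENNReal.ofReal p)) : Prop :=
  w ∈ W10 N p hp Ω ∧ w ≠ 0 ∧
  ∀ φ : EucN N → ℝ, IsTestFun Ω φ →
    (∫ x, ‖w.2 x‖ ^ (p - 2) * ⟪w.2 x, gradient φ x⟫) =
      lam * ∫ x, |w.1 x| ^ (p - 2) * (w.1 x) * φ x

/-- `lam` is an eigenvalue of the Dirichlet `p`-Laplacian on `Ω`. -/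
def IsEigenvalue (N : ℕ) (p : ℝ) (hp : 1 ≤ p) (Ω : Set (EucN N)) (lam : ℝ) : Prop :=
  ∃ w, IsEigenfunction N p hp Ω lam w

/-- `v = (v, ∇v)` is a non-negative weak subsolution of `-Δ_p u = lam · u^{p-1}` in `Ω`. -/
def IsSubsolution (N : ℕ) (p : ℝ) (hp : 1 ≤ p) (Ω : Set (EucN N)) (lam : ℝ)
    (v : SobPair N (ENNReal.ofReal p)) : Prop :=
  v ∈ W10 N p hp Ω ∧ (∀ᵐ x, 0 ≤ v.1 x) ∧
  ∀ φ ∈ W10 N p hp Ω, (∀ᵐ x, 0 ≤ φ.1 x) →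
    (∫ x, ‖v.2 x‖ ^ (p - 2) * ⟪v.2 x, φ.2 x⟫) ≤ lam * ∫ x, (v.1 x) ^ (p - 1) * φ.1 x

/-- A strongly confining potential. -/
def StronglyConfining (N : ℕ) (V : EucN N → ℝ) : Prop :=
  LocallyIntegrable V volume ∧ (∀ᵐ x, 0 ≤ V x) ∧
  ∃ α : ℝ → ℝ, (∀ R > (0 : ℝ), 0 < α R) ∧ MonotoneOn α (Set.Ioi 0) ∧
    Tendsto α atTop atTop ∧
    ∀ R > (0 : ℝ), ∀ᵐ x, x ∉ ball (0 : EucN N) R → α R ≤ V x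

/-- Triples `(u, g, h)` in `L^q × L^q × L^q`; `h` plays the role of `V^{1/p} u` in the weighted
Sobolev space. -/
abbrev SobTriple (N : ℕ) (q : ℝ≥0∞) :=
  Lp ℝ q (volume : Measure (EucN N)) × Lp (EucN N) q (volume : Measure (EucN N)) ×
    Lp ℝ q (volume : Measure (EucN N))

/-- A triple given (a.e.) by a test function, its gradient, and `V^{1/p}` times it. -/
def IsTestTriple {N : ℕ} (q : ℝ≥0∞) (p : ℝ) (Ω : Set (EucN N)) (V : EucN N → ℝ)
    (w : SobTriple N q) : Prop :=
  ∃ ψ : EucN N → ℝ, IsTestFun Ω ψ ∧ (⇑w.1 =ᵐ[volume] ψ) ∧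
    (⇑w.2.1 =ᵐ[volume] fun x => gradient ψ x) ∧
    (⇑w.2.2 =ᵐ[volume] fun x => (V x) ^ (1/p) * ψ x)

/-- The weighted Sobolev space `W^{1,p}_0(Ω; V)`, realized as a closure of triples coming from
test functions; the norm topology of `L^p × L^p × L^p` on such triples corresponds exactly to
the weighted Sobolev norm `(∫|∇u|^p + ∫(1+V)|u|^p)^{1/p}`. -/
def W10V (N : ℕ) (p : ℝ) (hp : 1 ≤ p) (Ω : Set (EucN N)) (V : EucN N → ℝ) :
    Set (SobTriple N (ENNReal.ofReal p)) :=
  letI := fact_one_le_ofReal hp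
  closure {w | IsTestTriple (ENNReal.ofReal p) p Ω V w}

/-- The class `𝒲_{k,p}(Ω; V)` for the weighted space. -/
def SobClassV (N : ℕ) (p : ℝ) (hp : 1 ≤ p) (Ω : Set (EucN N)) (V : EucN N → ℝ) (k : ℕ) :
    Set (Set (SobTriple N (ENNReal.ofReal p))) :=
  letI := fact_one_le_ofReal hp
  {K | K ⊆ W10V N p hp Ω V ∧ (∀ w ∈ K, (∫ x, |w.1 x| ^ p) = 1) ∧
       (∀ w ∈ K, -w ∈ K) ∧ IsCompact K ∧ genusGE K k}

/-- The perturbed minmax value `λ_{k,p}^{LS}(Ω; ε V)`, for the functional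
`G(φ) = ∫|∇φ|^p + ε ∫ V |φ|^p`. -/
def lambdaLSV (N : ℕ) (p : ℝ) (hp : 1 ≤ p) (Ω : Set (EucN N)) (V : EucN N → ℝ)
    (ε : ℝ) (k : ℕ) : ℝ≥0∞ :=
  ⨅ K ∈ SobClassV N p hp Ω V k, ⨆ w ∈ K,
    ENNReal.ofReal ((∫ x, ‖w.2.1 x‖ ^ p) + ε * ∫ x, |w.2.2 x| ^ p)

/-- `w` is a constrained critical point, at level `lam`, of the perturbed functional
`G(φ) = ∫|∇φ|^p + ε ∫ V |φ|^p` on the unit sphere of `L^p`. -/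
def IsCriticalV (N : ℕ) (p : ℝ) (hp : 1 ≤ p) (Ω : Set (EucN N)) (V : EucN N → ℝ)
    (ε : ℝ) (lam : ℝ) (w : SobTriple N (ENNReal.ofReal p)) : Prop :=
  w ∈ W10V N p hp Ω V ∧ (∫ x, |w.1 x| ^ p) = 1 ∧
  ∀ φ : EucN N → ℝ, IsTestFun Ω φ →
    (∫ x, ‖w.2.1 x‖ ^ (p - 2) * ⟪w.2.1 x, gradient φ x⟫)
      + ε * ∫ x, V x * |w.1 x| ^ (p - 2) * (w.1 x) * φ x
    = lam * ∫ x, |w.1 x| ^ (p - 2) * (w.1 x) * φ x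

/-- The embedding `W^{1,p}_0(Ω) ↪ L^p(Ω)` is compact: every bounded sequence in `W^{1,p}_0(Ω)`
has a subsequence converging strongly in `L^p`. -/
def CompactSobolevEmbedding (N : ℕ) (p : ℝ) (hp : 1 ≤ p) (Ω : Set (EucN N)) : Prop :=
  ∀ w : ℕ → SobPair N (ENNReal.ofReal p), (∀ n, w n ∈ W10 N p hp Ω) →
    (∃ M : ℝ≥0∞, M ≠ ⊤ ∧ ∀ n, eLpNorm (⇑(w n).1) (ENNReal.ofReal p) volume ≤ M ∧
        eLpNorm (⇑(w n).2) (ENNReal.ofReal p) volume ≤ M) →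
    ∃ σ : ℕ → ℕ, StrictMono σ ∧ ∃ u : EucN N → ℝ, MemLp u (ENNReal.ofReal p) volume ∧
      Tendsto (fun n => eLpNorm (⇑(w (σ n)).1 - u) (ENNReal.ofReal p) volume) atTop (𝓝 0)

/-! By density one may work with test functions. A bounded set of test functions of
`W^{1,p}_0(Ω)` is equicontinuous under translations, because `‖u(· + h) - u‖_p ≤ |h| ‖∇u‖_p`, so
by the Kolmogorov–Riesz theorem it is relatively compact in `L^p` as soon as it is tight at
infinity. If `E_p(Ω) = ∞`, tightness follows by applying the Poincaré inequality of `Ω` minus a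
large ball to the functions multiplied by a cut-off vanishing on that ball. If `E_p(Ω) < ∞`,
there are functions of unit `L^p` norm and bounded gradient supported outside larger and larger
balls; an `L^p` limit of a subsequence would have norm `1` and vanish almost everywhere. -/

theorem exists_finite_cover_of_totallyBounded_image {X Y : Type*} [PseudoEMetricSpace X]
    [PseudoEMetricSpace Y] {K : Set X} {Φ : X → Y} (hΦ : TotallyBounded (Φ '' K)) {δ ε : ℝ≥0∞}
    (hδ : 0 < δ) (h : ∀ x ∈ K, ∀ y ∈ K, edist (Φ x) (Φ y) < δ → edist x y < ε) :
    ∃ t : Set X, t.Finite ∧ K ⊆ ⋃ y ∈ t, eball y ε := by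
  obtain ⟨t, htK, htfin, hcover⟩ :=
    exists_subset_image_finite_and.1 (EMetric.totallyBounded_iff'.1 hΦ δ hδ)
  refine ⟨t, htfin, fun x hx => ?_⟩
  obtain ⟨y, hy, hxy⟩ : ∃ y ∈ t, edist (Φ x) (Φ y) < δ := by
    simpa using hcover (mem_image_of_mem Φ hx)
  exact mem_biUnion hy (h x hx y (htK hy) hxy)

section Average

variable {α F : Type*} [MeasurableSpace α] [NormedAddCommGroup F] [NormedSpace ℝ F]
  {μ : Measure α} {f : α → F} {p : ℝ}

theorem enorm_integral_rpow_le_lintegral_enorm_rpow [IsProbabilityMeasure μ] (hp : 1 ≤ p)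
    (hf : AEStronglyMeasurable f μ) : ‖∫ x, f x ∂μ‖ₑ ^ p ≤ ∫⁻ x, ‖f x‖ₑ ^ p ∂μ := by
  have hp0 : 0 < p := by positivity
  rw [← ENNReal.le_rpow_inv_iff hp0]
  calc ‖∫ x, f x ∂μ‖ₑ ≤ eLpNorm f 1 μ := by
        rw [eLpNorm_one_eq_lintegral_enorm]
        exact enorm_integral_le_lintegral_enorm f
    _ ≤ eLpNorm f (ENNReal.ofReal p) μ :=
        eLpNorm_le_eLpNorm_of_exponent_le (ENNReal.one_le_ofReal.2 hp) hf
    _ = (∫⁻ x, ‖f x‖ₑ ^ p ∂μ) ^ p⁻¹ := by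
        rw [eLpNorm_eq_lintegral_rpow_enorm_toReal (by simpa) ofReal_ne_top,
          ENNReal.toReal_ofReal hp0.le, one_div]

theorem enorm_setAverage_rpow_le {s : Set α} (hp : 1 ≤ p) (hs₀ : μ s ≠ 0) (hs : μ s ≠ ∞)
    (hf : AEStronglyMeasurable f (μ.restrict s)) :
    ‖⨍ x in s, f x ∂μ‖ₑ ^ p ≤ (μ s)⁻¹ * ∫⁻ x in s, ‖f x‖ₑ ^ p ∂μ := by
  have : IsProbabilityMeasure ((μ s)⁻¹ • μ.restrict s) :=
    ⟨by simp [ENNReal.inv_mul_cancel hs₀ hs]⟩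
  rw [setAverage_eq', ← smul_eq_mul, ← lintegral_smul_measure]
  exact enorm_integral_rpow_le_lintegral_enorm_rpow hp (hf.smul_measure _)

theorem setAverage_sub {g : α → F} {s : Set α} (hf : IntegrableOn f s μ)
    (hg : IntegrableOn g s μ) :
    ⨍ x in s, (f x - g x) ∂μ = ⨍ x in s, f x ∂μ - ⨍ x in s, g x ∂μ := by
  simp only [setAverage_eq, integral_sub hf hg, smul_sub]

end Average

theorem eLpNorm_le_restrict_add_restrict_compl {α F : Type*} [MeasurableSpace α]
    [NormedAddCommGroup F] {μ : Measure α} {f : α → F} {q : ℝ≥0∞} (hq : 1 ≤ q)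
    (hf : AEStronglyMeasurable f μ) {s : Set α} (hs : MeasurableSet s) :
    eLpNorm f q μ ≤ eLpNorm f q (μ.restrict s) + eLpNorm f q (μ.restrict sᶜ) := by
  rw [← eLpNorm_indicator_eq_eLpNorm_restrict hs,
    ← eLpNorm_indicator_eq_eLpNorm_restrict hs.compl]
  conv_lhs => rw [← indicator_self_add_compl s f]
  exact eLpNorm_add_le (hf.indicator hs) (hf.indicator hs.compl) hq

section KolmogorovRiesz

variable {E F : Type*} [NormedAddCommGroup E] [NormedSpace ℝ E] [FiniteDimensional ℝ E]
  [MeasurableSpace E] [BorelSpace E] {μ : Measure E} [NormedAddCommGroup F]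
  {f : E → F} {p δ : ℝ} {q ω a : ℝ≥0∞}

/-- The mean `p`-oscillation of `f` at `x` on the scale `δ`. The displacements range over the ball
of radius `2 * δ`, which contains all differences of points of a ball of radius `δ`, while the
normalization is the volume of the latter. -/
def meanOscillation (μ : Measure E) (p δ : ℝ) (f : E → F) (x : E) : ℝ≥0∞ :=
  (μ (ball 0 δ))⁻¹ * ∫⁻ h in ball 0 (2 * δ), ‖f (x + h) - f x‖ₑ ^ p ∂μ

theorem measurable_enorm_translate_sub_rpow (hf : StronglyMeasurable f) (p : ℝ) :
    Measurable fun z : E × E => ‖f (z.1 + z.2) - f z.1‖ₑ ^ p :=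
  ((hf.comp_measurable measurable_add).sub
    (hf.comp_measurable measurable_fst)).enorm.pow_const p

theorem measurable_meanOscillation [SFinite μ] (hf : StronglyMeasurable f) :
    Measurable (meanOscillation μ p δ f) :=
  (measurable_enorm_translate_sub_rpow hf p).lintegral_prod_right'.const_mul _

variable [μ.IsAddHaarMeasure]

theorem lintegral_meanOscillation_le (hδ : 0 < δ) (hf : StronglyMeasurable f)
    (hω : ∀ h ∈ ball (0 : E) (2 * δ), ∫⁻ x, ‖f (x + h) - f x‖ₑ ^ p ∂μ ≤ ω) :
    ∫⁻ x, meanOscillation μ p δ f x ∂μ ≤ 2 ^ Module.finrank ℝ E * ω := by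
  have hμ₀ : μ (ball 0 δ) ≠ 0 := (measure_ball_pos μ 0 hδ).ne'
  simp only [meanOscillation]
  rw [lintegral_const_mul' _ _ (ENNReal.inv_ne_top.2 hμ₀), lintegral_lintegral_swap
    (measurable_enorm_translate_sub_rpow hf p).aemeasurable]
  calc (μ (ball 0 δ))⁻¹ * ∫⁻ h in ball 0 (2 * δ), ∫⁻ x, ‖f (x + h) - f x‖ₑ ^ p ∂μ ∂μ
      ≤ (μ (ball 0 δ))⁻¹ * ∫⁻ _h in ball (0 : E) (2 * δ), ω ∂μ := by
        gcongr 1; exact setLIntegral_mono' measurableSet_ball hω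
    _ = (μ (ball 0 δ))⁻¹ * μ (ball 0 δ) * (2 ^ Module.finrank ℝ E * ω) := by
        rw [setLIntegral_const, Measure.addHaar_ball_mul_of_pos μ 0 two_pos,
          ENNReal.ofReal_pow zero_le_two, ENNReal.ofReal_ofNat]
        ring
    _ = 2 ^ Module.finrank ℝ E * ω := by
        rw [ENNReal.inv_mul_cancel hμ₀ measure_ball_lt_top.ne, one_mul]

variable [NormedSpace ℝ F]

theorem enorm_sub_setAverage_ball_rpow_le [CompleteSpace F] (hp : 1 ≤ p) {c x : E}
    (hf : IntegrableOn f (ball c δ) μ) (hx : x ∈ ball c δ) :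
    ‖f x - ⨍ y in ball c δ, f y ∂μ‖ₑ ^ p ≤ meanOscillation μ p δ f x := by
  have hδ : 0 < δ := pos_of_mem_ball hx
  have hμ₀ : μ (ball c δ) ≠ 0 := (measure_ball_pos μ c hδ).ne'
  have hμ : μ (ball c δ) ≠ ∞ := measure_ball_lt_top.ne
  have hsub : f x - ⨍ y in ball c δ, f y ∂μ = -⨍ y in ball c δ, (f y - f x) ∂μ := by
    rw [setAverage_sub hf (integrableOn_const hμ), setAverage_const hμ₀ hμ, neg_sub]
  rw [hsub, enorm_neg, meanOscillation, ← Measure.addHaar_ball_center μ c δ]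
  refine (enorm_setAverage_rpow_le hp hμ₀ hμ (hf.1.sub aestronglyMeasurable_const)).trans ?_
  gcongr _ * ?_
  rw [← lintegral_indicator measurableSet_ball, ← lintegral_indicator measurableSet_ball,
    ← lintegral_add_left_eq_self _ x]
  refine lintegral_mono fun h => ?_
  by_cases hh : x + h ∈ ball c δ
  · have : h ∈ ball (0 : E) (2 * δ) := by
      rw [mem_ball_zero_iff]
      calc ‖h‖ = dist (x + h) x := by simp
        _ < 2 * δ := by linarith [dist_triangle_right (x + h) x c, mem_ball.1 hh, mem_ball.1 hx]
    simp [hh, this]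
  · simp [hh]

theorem enorm_le_meanOscillation_rpow_add [CompleteSpace F] (hp : 1 ≤ p) {c x : E}
    (hf : IntegrableOn f (ball c δ) μ) (hx : x ∈ ball c δ)
    (ha : ‖⨍ y in ball c δ, f y ∂μ‖ₑ ≤ a) :
    ‖f x‖ₑ ≤ meanOscillation μ p δ f x ^ (1 / p) + a := by
  have hosc : ‖f x - ⨍ y in ball c δ, f y ∂μ‖ₑ ≤ meanOscillation μ p δ f x ^ (1 / p) := by
    rw [one_div, ENNReal.le_rpow_inv_iff (by positivity)]
    exact enorm_sub_setAverage_ball_rpow_le hp hf hx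
  calc ‖f x‖ₑ = ‖(f x - ⨍ y in ball c δ, f y ∂μ) + ⨍ y in ball c δ, f y ∂μ‖ₑ := by
        rw [sub_add_cancel]
    _ ≤ meanOscillation μ p δ f x ^ (1 / p) + a :=
        (enorm_add_le _ _).trans (add_le_add hosc ha)

theorem eLpNorm_restrict_le_of_setAverage_le [CompleteSpace F] (hq : 1 ≤ q) (hq' : q ≠ ∞)
    (hδ : 0 < δ) (hf : MemLp f q μ) (hfm : StronglyMeasurable f) {s t : Set E}
    (hω : ∀ h ∈ ball (0 : E) (2 * δ), eLpNorm (fun x => f (x + h) - f x) q μ ≤ ω)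
    (hs : MeasurableSet s) (hst : s ⊆ ⋃ c ∈ t, ball c δ)
    (ha : ∀ c ∈ t, ‖⨍ y in ball c δ, f y ∂μ‖ₑ ≤ a) :
    eLpNorm f q (μ.restrict s) ≤
      (2 ^ Module.finrank ℝ E) ^ (1 / q.toReal) * ω + a * μ s ^ (1 / q.toReal) := by
  have hq₀ : q ≠ 0 := (zero_lt_one.trans_le hq).ne'
  have hp : 1 ≤ q.toReal := by simpa using ENNReal.toReal_mono hq' hq
  set p := q.toReal
  have hp₀ : 0 < p := by positivity
  have hpt : ∀ x ∈ s, ‖f x‖ₑ ≤ meanOscillation μ p δ f x ^ (1 / p) + a := by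
    intro x hx
    obtain ⟨c, hc, hxc⟩ := mem_iUnion₂.1 (hst hx)
    have : IsFiniteMeasure (μ.restrict (ball c δ)) := ⟨by simpa using measure_ball_lt_top⟩
    exact enorm_le_meanOscillation_rpow_add hp ((hf.restrict _).integrable hq) hxc (ha c hc)
  have hint : ∫⁻ x, meanOscillation μ p δ f x ∂μ ≤ 2 ^ Module.finrank ℝ E * ω ^ p := by
    refine lintegral_meanOscillation_le hδ hfm fun h hh => ?_
    rw [← ENNReal.rpow_inv_le_iff hp₀, ← one_div,
      ← eLpNorm_eq_lintegral_rpow_enorm_toReal hq₀ hq']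
    exact hω h hh
  calc eLpNorm f q (μ.restrict s) = (∫⁻ x in s, ‖f x‖ₑ ^ p ∂μ) ^ (1 / p) :=
        eLpNorm_eq_lintegral_rpow_enorm_toReal hq₀ hq'
    _ ≤ (∫⁻ x in s, (meanOscillation μ p δ f x ^ (1 / p) + a) ^ p ∂μ) ^ (1 / p) := by
        gcongr 1
        exact setLIntegral_mono' hs fun x hx => by gcongr; exact hpt x hx
    _ ≤ (∫⁻ x in s, (meanOscillation μ p δ f x ^ (1 / p)) ^ p ∂μ) ^ (1 / p) +
          (∫⁻ _ in s, a ^ p ∂μ) ^ (1 / p) :=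
        ENNReal.lintegral_Lp_add_le
          ((measurable_meanOscillation hfm).pow_const _).aemeasurable aemeasurable_const hp
    _ ≤ (∫⁻ x, meanOscillation μ p δ f x ∂μ) ^ (1 / p) + a * μ s ^ (1 / p) := by
        simp only [one_div, ENNReal.rpow_inv_rpow hp₀.ne', setLIntegral_const]
        rw [ENNReal.mul_rpow_of_nonneg _ _ (by positivity), ENNReal.rpow_rpow_inv hp₀.ne']
        gcongr
        exact Measure.restrict_le_self
    _ ≤ _ := by
        grw [hint]
        rw [ENNReal.mul_rpow_of_nonneg _ _ (by positivity), one_div, ENNReal.rpow_rpow_inv hp₀.ne']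

theorem totallyBounded_image_setAverage_ball [ProperSpace F] [Fact (1 ≤ q)] (hq' : q ≠ ∞)
    (hδ : 0 < δ) {K : Set (Lp F q μ)} (hK : Bornology.IsBounded K) (t : Finset E) :
    TotallyBounded ((fun f : Lp F q μ => fun c : t => ⨍ y in ball (c : E) δ, f y ∂μ) '' K) := by
  have hq₀ : q ≠ 0 := (zero_lt_one.trans_le Fact.out).ne'
  have hp : 1 ≤ q.toReal := by simpa using ENNReal.toReal_mono hq' (Fact.out : 1 ≤ q)
  obtain ⟨M, hM⟩ := isBounded_iff_forall_norm_le.1 hK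
  let A : ℝ≥0∞ := ((μ (ball 0 δ))⁻¹ * ENNReal.ofReal M ^ q.toReal) ^ q.toReal⁻¹
  have hA : A ≠ ∞ := by
    have := (measure_ball_pos μ 0 hδ).ne'
    finiteness
  refine (isCompact_closedBall (0 : t → F) A.toReal).totallyBounded.subset ?_
  rintro _ ⟨f, hf, rfl⟩
  rw [mem_closedBall_zero_iff, pi_norm_le_iff_of_nonneg (by positivity)]
  intro c
  rw [← toReal_enorm]
  refine ENNReal.toReal_mono hA ?_
  rw [ENNReal.le_rpow_inv_iff (by positivity), ← Measure.addHaar_ball_center μ c δ]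
  refine (enorm_setAverage_rpow_le hp (measure_ball_pos μ _ hδ).ne' measure_ball_lt_top.ne
    (Lp.aestronglyMeasurable f).restrict).trans ?_
  gcongr _ * ?_
  calc ∫⁻ x in ball ↑c δ, ‖f x‖ₑ ^ q.toReal ∂μ ≤ ∫⁻ x, ‖f x‖ₑ ^ q.toReal ∂μ :=
        setLIntegral_le_lintegral _ _
    _ = ‖f‖ₑ ^ q.toReal := by
        rw [Lp.enorm_def, eLpNorm_eq_lintegral_rpow_enorm_toReal hq₀ hq', one_div,
          ENNReal.rpow_inv_rpow (by positivity)]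
    _ ≤ ENNReal.ofReal M ^ q.toReal := by
        gcongr
        rw [← ofReal_norm]
        exact ENNReal.ofReal_le_ofReal (hM f hf)

theorem edist_le_of_tight_of_equicontinuous [CompleteSpace F] [Fact (1 ≤ q)] (hq' : q ≠ ∞)
    (hδ : 0 < δ) {f g : Lp F q μ} {s t : Set E} (hs : MeasurableSet s) (hst : s ⊆ ⋃ c ∈ t, ball c δ)
    (ht : ∀ u ∈ ({f, g} : Set (Lp F q μ)), eLpNorm u q (μ.restrict sᶜ) ≤ ω)
    (hω : ∀ u ∈ ({f, g} : Set (Lp F q μ)), ∀ h ∈ ball (0 : E) (2 * δ),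
      eLpNorm (fun x => u (x + h) - u x) q μ ≤ ω)
    (ha : ∀ c ∈ t, edist (⨍ y in ball c δ, f y ∂μ) (⨍ y in ball c δ, g y ∂μ) ≤ a) :
    edist f g ≤ ω * (2 + 2 * (2 ^ Module.finrank ℝ E) ^ (1 / q.toReal)) +
      a * μ s ^ (1 / q.toReal) := by
  have hfg : StronglyMeasurable (⇑f - ⇑g) := (Lp.stronglyMeasurable f).sub (Lp.stronglyMeasurable g)
  have hsub {ν : Measure E} {u v : E → F} (hu : AEStronglyMeasurable u ν)
      (hv : AEStronglyMeasurable v ν) (huω : eLpNorm u q ν ≤ ω) (hvω : eLpNorm v q ν ≤ ω) :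
      eLpNorm (u - v) q ν ≤ ω + ω :=
    (eLpNorm_sub_le hu hv Fact.out).trans (add_le_add huω hvω)
  have htail : eLpNorm (⇑f - ⇑g) q (μ.restrict sᶜ) ≤ ω + ω :=
    hsub (Lp.aestronglyMeasurable f).restrict (Lp.aestronglyMeasurable g).restrict
      (ht f (by simp)) (ht g (by simp))
  have htrans : ∀ h ∈ ball (0 : E) (2 * δ),
      eLpNorm (fun x => (⇑f - ⇑g) (x + h) - (⇑f - ⇑g) x) q μ ≤ ω + ω := by
    intro h hh
    have hmeas (u : Lp F q μ) : AEStronglyMeasurable (fun x => u (x + h) - u x) μ :=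
      (((Lp.stronglyMeasurable u).comp_measurable (measurable_add_const h)).sub
        (Lp.stronglyMeasurable u)).aestronglyMeasurable
    convert hsub (hmeas f) (hmeas g) (hω f (by simp) h hh) (hω g (by simp) h hh)
      using 2
    ext x
    simp only [Pi.sub_apply]
    abel
  have hav : ∀ c ∈ t, ‖⨍ y in ball c δ, (⇑f - ⇑g) y ∂μ‖ₑ ≤ a := by
    intro c hc
    have : IsFiniteMeasure (μ.restrict (ball c δ)) := ⟨by simpa using measure_ball_lt_top⟩
    have hi (u : Lp F q μ) : IntegrableOn u (ball c δ) μ :=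
      ((Lp.memLp u).restrict _).integrable Fact.out
    rw [Pi.sub_def, setAverage_sub (hi f) (hi g), ← edist_eq_enorm_sub]
    exact ha c hc
  calc edist f g = eLpNorm (⇑f - ⇑g) q μ := Lp.edist_def f g
    _ ≤ eLpNorm (⇑f - ⇑g) q (μ.restrict s) + eLpNorm (⇑f - ⇑g) q (μ.restrict sᶜ) :=
        eLpNorm_le_restrict_add_restrict_compl Fact.out hfg.aestronglyMeasurable hs
    _ ≤ ((2 ^ Module.finrank ℝ E) ^ (1 / q.toReal) * (ω + ω) + a * μ s ^ (1 / q.toReal)) +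
          (ω + ω) :=
        add_le_add (eLpNorm_restrict_le_of_setAverage_le Fact.out hq' hδ
          ((Lp.memLp f).sub (Lp.memLp g)) hfg htrans hs hst hav) htail
    _ = ω * (2 + 2 * (2 ^ Module.finrank ℝ E) ^ (1 / q.toReal)) + a * μ s ^ (1 / q.toReal) := by
        ring

theorem totallyBounded_of_tight_of_equicontinuous [ProperSpace F] [Fact (1 ≤ q)] (hq' : q ≠ ∞)
    {K : Set (Lp F q μ)} (hK : Bornology.IsBounded K)
    (htight : ∀ ε > 0, ∃ R, ∀ f ∈ K, eLpNorm f q (μ.restrict (ball 0 R)ᶜ) ≤ ε)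
    (hequi : ∀ ε > 0, ∃ δ > 0, ∀ f ∈ K, ∀ h ∈ ball (0 : E) δ,
      eLpNorm (fun x => f (x + h) - f x) q μ ≤ ε) :
    TotallyBounded K := by
  rw [EMetric.totallyBounded_iff]
  intro ε hε
  have hε2 : ε / 2 ≠ 0 := by simpa using hε.ne'
  have hconst : 2 + 2 * ((2 : ℝ≥0∞) ^ Module.finrank ℝ E) ^ (1 / q.toReal) ≠ ∞ := by finiteness
  have hμR (R : ℝ) : μ (ball (0 : E) R) ^ (1 / q.toReal) ≠ ∞ :=
    ENNReal.rpow_ne_top_of_nonneg (by positivity) measure_ball_lt_top.ne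
  obtain ⟨τ, hτ, hτε⟩ := ENNReal.exists_nnreal_pos_mul_lt hconst hε2
  obtain ⟨R, hR⟩ := htight τ (by exact_mod_cast hτ)
  obtain ⟨δ, hδ, hequiδ⟩ := hequi τ (by exact_mod_cast hτ)
  obtain ⟨a, ha, haε⟩ := ENNReal.exists_nnreal_pos_mul_lt (hμR R) hε2
  obtain ⟨t, -, htfin, ht⟩ :=
    finite_cover_balls_of_compact (isCompact_closedBall (0 : E) R) (half_pos hδ)
  lift t to Finset E using htfin
  refine exists_finite_cover_of_totallyBounded_image
    (totallyBounded_image_setAverage_ball hq' (half_pos hδ) hK t)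
    (by exact_mod_cast ha : (0 : ℝ≥0∞) < a) fun f hf g hg hfg => ?_
  have hpair : ∀ u ∈ ({f, g} : Set (Lp F q μ)), u ∈ K := by rintro u (rfl | rfl) <;> assumption
  have hav : ∀ c ∈ t, edist (⨍ y in ball c (δ / 2), f y ∂μ) (⨍ y in ball c (δ / 2), g y ∂μ) ≤ a :=
    fun c hc => (edist_le_pi_edist _ _ (⟨c, hc⟩ : t)).trans hfg.le
  calc edist f g ≤ τ * (2 + 2 * (2 ^ Module.finrank ℝ E) ^ (1 / q.toReal)) +
        a * μ (ball 0 R) ^ (1 / q.toReal) := by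
        refine edist_le_of_tight_of_equicontinuous hq' (half_pos hδ) measurableSet_ball
          (ball_subset_closedBall.trans ht) (fun u hu => hR u (hpair u hu))
          (fun u hu h hh => hequiδ u (hpair u hu) h ?_) hav
        rwa [mul_div_cancel₀ _ two_ne_zero] at hh
    _ < ε / 2 + ε / 2 := ENNReal.add_lt_add hτε haε
    _ = ε := ENNReal.add_halves ε

end KolmogorovRiesz

section Translation

variable {E F : Type*} [NormedAddCommGroup E] [NormedSpace ℝ E] [NormedAddCommGroup F]
  [NormedSpace ℝ F] [CompleteSpace F] {ψ : E → F}

theorem translate_sub_eq_integral_fderiv (hψ : ContDiff ℝ 1 ψ) (x h : E) :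
    ψ (x + h) - ψ x = ∫ t in Ioc (0 : ℝ) 1, fderiv ℝ ψ (x + t • h) h := by
  have hderiv : ∀ t ∈ uIcc (0 : ℝ) 1, HasDerivAt (fun t : ℝ => ψ (x + t • h))
      (fderiv ℝ ψ (x + t • h) h) t := by
    intro t _
    have hline : HasDerivAt (fun t : ℝ => x + t • h) h t := by
      simpa using ((hasDerivAt_id t).smul_const h).const_add x
    exact (hψ.differentiable one_ne_zero _).hasFDerivAt.comp_hasDerivAt t hline
  have hcont : Continuous fun t : ℝ => fderiv ℝ ψ (x + t • h) h := by
    have := hψ.continuous_fderiv one_ne_zero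
    fun_prop
  simpa [intervalIntegral.integral_of_le zero_le_one] using
    (intervalIntegral.integral_eq_sub_of_hasDerivAt hderiv (hcont.intervalIntegrable _ _)).symm

theorem enorm_translate_sub_rpow_le {p : ℝ} (hp : 1 ≤ p) (hψ : ContDiff ℝ 1 ψ) (x h : E) :
    ‖ψ (x + h) - ψ x‖ₑ ^ p ≤
      ‖h‖ₑ ^ p * ∫⁻ t in Ioc (0 : ℝ) 1, ‖fderiv ℝ ψ (x + t • h)‖ₑ ^ p := by
  have : IsProbabilityMeasure (volume.restrict (Ioc (0 : ℝ) 1)) := ⟨by simp⟩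
  have hcont : Continuous fun t : ℝ => fderiv ℝ ψ (x + t • h) h := by
    have := hψ.continuous_fderiv one_ne_zero
    fun_prop
  rw [translate_sub_eq_integral_fderiv hψ, ← lintegral_const_mul' _ _ (by finiteness)]
  refine (enorm_integral_rpow_le_lintegral_enorm_rpow hp hcont.aestronglyMeasurable).trans ?_
  gcongr with t
  rw [← ENNReal.mul_rpow_of_nonneg _ _ (by positivity), mul_comm]
  gcongr
  exact ContinuousLinearMap.le_opENorm _ _

variable [MeasurableSpace E] [BorelSpace E] {μ : Measure E} [SFinite μ] [μ.IsAddRightInvariant]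

theorem eLpNorm_translate_sub_le {q : ℝ≥0∞} (hq : 1 ≤ q) (hq' : q ≠ ∞) (hψ : ContDiff ℝ 1 ψ)
    (h : E) :
    eLpNorm (fun x => ψ (x + h) - ψ x) q μ ≤ ‖h‖ₑ * eLpNorm (fderiv ℝ ψ) q μ := by
  have hq₀ : q ≠ 0 := (zero_lt_one.trans_le hq).ne'
  have hp : 1 ≤ q.toReal := by simpa using ENNReal.toReal_mono hq' hq
  set p := q.toReal
  have hp₀ : 0 < p := by positivity
  have hmeas : Measurable fun z : E × ℝ => ‖fderiv ℝ ψ (z.1 + z.2 • h)‖ₑ ^ p := by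
    have := hψ.continuous_fderiv one_ne_zero
    have hcont : Continuous fun z : E × ℝ => fderiv ℝ ψ (z.1 + z.2 • h) := by fun_prop
    exact hcont.enorm.measurable.pow_const p
  rw [eLpNorm_eq_lintegral_rpow_enorm_toReal hq₀ hq',
    eLpNorm_eq_lintegral_rpow_enorm_toReal hq₀ hq', one_div, ENNReal.rpow_inv_le_iff hp₀,
    ENNReal.mul_rpow_of_nonneg _ _ hp₀.le, ENNReal.rpow_inv_rpow hp₀.ne']
  calc ∫⁻ x, ‖ψ (x + h) - ψ x‖ₑ ^ p ∂μ
      ≤ ∫⁻ x, (‖h‖ₑ ^ p * ∫⁻ t in Ioc (0 : ℝ) 1, ‖fderiv ℝ ψ (x + t • h)‖ₑ ^ p) ∂μ :=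
        lintegral_mono fun x => enorm_translate_sub_rpow_le hp hψ x h
    _ = ‖h‖ₑ ^ p * ∫⁻ t in Ioc (0 : ℝ) 1, (∫⁻ x, ‖fderiv ℝ ψ (x + t • h)‖ₑ ^ p ∂μ) := by
        rw [lintegral_const_mul' _ _ (by finiteness), lintegral_lintegral_swap hmeas.aemeasurable]
    _ = ‖h‖ₑ ^ p * ∫⁻ x, ‖fderiv ℝ ψ x‖ₑ ^ p ∂μ := by
        simp [lintegral_add_right_eq_self fun x => ‖fderiv ℝ ψ x‖ₑ ^ p]

end Translation

section Cutoff

variable {E : Type*} [NormedAddCommGroup E] [NormedSpace ℝ E] [HasContDiffBump E]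
  {r : ℝ}

/-- A smooth cut-off vanishing on the ball of radius `r` around the origin and equal to `1` outside
the ball of radius `2 * r`, obtained by rescaling one fixed bump function so that its gradient is
bounded uniformly in `r ≥ 1`. -/
def exteriorCutoff (r : ℝ) (x : E) : ℝ :=
  1 - (⟨1, 2, one_pos, one_lt_two⟩ : ContDiffBump (0 : E)) (r⁻¹ • x)

theorem contDiff_exteriorCutoff (r : ℝ) : ContDiff ℝ (⊤ : ℕ∞) (exteriorCutoff (E := E) r) :=
  contDiff_const.sub ((ContDiffBump.contDiff _).comp (contDiff_const_smul _))

theorem norm_exteriorCutoff_le_one (r : ℝ) (x : E) : ‖exteriorCutoff r x‖ ≤ 1 := by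
  let χ : ContDiffBump (0 : E) := ⟨1, 2, one_pos, one_lt_two⟩
  have hχ : χ (r⁻¹ • x) ∈ Icc (0 : ℝ) 1 := ⟨χ.nonneg, χ.le_one⟩
  change |1 - χ (r⁻¹ • x)| ≤ 1
  rw [abs_of_nonneg (sub_nonneg.2 hχ.2)]
  exact sub_le_self _ hχ.1

theorem tsupport_exteriorCutoff_subset (hr : 0 < r) :
    tsupport (exteriorCutoff (E := E) r) ⊆ (ball 0 r)ᶜ := by
  refine closure_minimal (fun x hx hxr => hx ?_) isOpen_ball.isClosed_compl
  rw [exteriorCutoff, ContDiffBump.one_of_mem_closedBall, sub_self]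
  rw [mem_ball_zero_iff] at hxr
  simpa [norm_smul, abs_of_pos hr, inv_mul_le_iff₀ hr] using hxr.le

theorem exteriorCutoff_eq_one {x : E} (hr : 0 < r)
    (hx : x ∉ ball 0 (2 * r)) : exteriorCutoff r x = 1 := by
  rw [exteriorCutoff, ContDiffBump.zero_of_le_dist, sub_zero]
  simpa [norm_smul, abs_of_pos hr, le_inv_mul_iff₀ hr, mul_comm r] using hx

variable (E) in
theorem exists_norm_fderiv_exteriorCutoff_le [FiniteDimensional ℝ E] :
    ∃ C : NNReal, ∀ r ≥ 1, ∀ x : E, ‖fderiv ℝ (exteriorCutoff r) x‖ ≤ C := by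
  let χ : ContDiffBump (0 : E) := ⟨1, 2, one_pos, one_lt_two⟩
  obtain ⟨C, hC⟩ := (χ.contDiff.continuous_fderiv one_ne_zero).bounded_above_of_compact_support
    (χ.hasCompactSupport.fderiv ℝ)
  refine ⟨C.toNNReal, fun r hr x => ?_⟩
  have hfderiv : fderiv ℝ (exteriorCutoff r) x = -(r⁻¹ • fderiv ℝ χ (r⁻¹ • x)) := by
    unfold exteriorCutoff
    rw [fderiv_const_sub, fderiv_comp_smul]
  calc ‖fderiv ℝ (exteriorCutoff r) x‖ = r⁻¹ * ‖fderiv ℝ χ (r⁻¹ • x)‖ := by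
        rw [hfderiv, norm_neg, norm_smul, Real.norm_of_nonneg (by positivity)]
    _ ≤ 1 * C.toNNReal := by
        gcongr
        exacts [inv_le_one_of_one_le₀ hr, (hC _).trans (Real.le_coe_toNNReal C)]
    _ = C.toNNReal := one_mul _

end Cutoff

section Gradient

variable {E : Type*} [NormedAddCommGroup E] [InnerProductSpace ℝ E] [CompleteSpace E]
  {ψ η : E → ℝ}

theorem norm_gradient (ψ : E → ℝ) (x : E) : ‖gradient ψ x‖ = ‖fderiv ℝ ψ x‖ := by
  rw [gradient, LinearIsometryEquiv.norm_map]

theorem continuous_gradient (hψ : ContDiff ℝ 1 ψ) : Continuous (gradient ψ) :=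
  (LinearIsometryEquiv.continuous _).comp (hψ.continuous_fderiv one_ne_zero)

theorem gradient_const_smul (hψ : Differentiable ℝ ψ) (c : ℝ) (x : E) :
    gradient (c • ψ) x = c • gradient ψ x := by
  simp only [gradient, fderiv_const_smul (hψ x), map_smul]

theorem norm_gradient_mul_le {C : ℝ} {x : E} (hη : DifferentiableAt ℝ η x)
    (hψ : DifferentiableAt ℝ ψ x) (hη₁ : ‖η x‖ ≤ 1) (hηC : ‖fderiv ℝ η x‖ ≤ C) :
    ‖gradient (η * ψ) x‖ ≤ ‖gradient ψ x‖ + C * ‖ψ x‖ := by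
  rw [norm_gradient, norm_gradient, fderiv_mul hη hψ]
  calc ‖η x • fderiv ℝ ψ x + ψ x • fderiv ℝ η x‖
      ≤ ‖η x‖ * ‖fderiv ℝ ψ x‖ + ‖ψ x‖ * ‖fderiv ℝ η x‖ :=
        (norm_add_le _ _).trans_eq (by rw [norm_smul, norm_smul])
    _ ≤ 1 * ‖fderiv ℝ ψ x‖ + ‖ψ x‖ * C := by gcongr
    _ = ‖fderiv ℝ ψ x‖ + C * ‖ψ x‖ := by ring

variable [MeasurableSpace E] [BorelSpace E] {μ : Measure E} {q : ℝ≥0∞}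

theorem eLpNorm_gradient_mul_le (hq : 1 ≤ q) {C : NNReal} (hη : ContDiff ℝ 1 η)
    (hψ : ContDiff ℝ 1 ψ) (hη₁ : ∀ x, ‖η x‖ ≤ 1) (hηC : ∀ x, ‖fderiv ℝ η x‖ ≤ C) :
    eLpNorm (gradient (η * ψ)) q μ ≤ eLpNorm (gradient ψ) q μ + C * eLpNorm ψ q μ := by
  calc eLpNorm (gradient (η * ψ)) q μ
      ≤ eLpNorm ((fun x => ‖gradient ψ x‖) + (C : ℝ) • fun x => ‖ψ x‖) q μ :=
        eLpNorm_mono_real fun x => norm_gradient_mul_le (hη.differentiable one_ne_zero x)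
          (hψ.differentiable one_ne_zero x) (hη₁ x) (hηC x)
    _ ≤ eLpNorm (fun x => ‖gradient ψ x‖) q μ + eLpNorm ((C : ℝ) • fun x => ‖ψ x‖) q μ :=
        eLpNorm_add_le (continuous_gradient hψ).norm.aestronglyMeasurable
          (hψ.continuous.norm.const_smul _).aestronglyMeasurable hq
    _ = eLpNorm (gradient ψ) q μ + C * eLpNorm ψ q μ := by
        rw [eLpNorm_const_smul, eLpNorm_norm, eLpNorm_norm]
        simp

end Gradient

section Enorm

variable {ι E F : Type*} [SeminormedAddCommGroup E] [SeminormedAddCommGroup F]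

theorem enorm_prod_eq_max (w : E × F) : ‖w‖ₑ = max ‖w.1‖ₑ ‖w.2‖ₑ := by
  simp only [← ofReal_norm, Prod.norm_def, ENNReal.ofReal_max]

theorem isBounded_range_iff_exists_enorm_le {w : ι → E} :
    Bornology.IsBounded (range w) ↔ ∃ M : ℝ≥0∞, M ≠ ⊤ ∧ ∀ i, ‖w i‖ₑ ≤ M := by
  simp only [isBounded_iff_forall_norm_le, forall_mem_range]
  constructor
  · rintro ⟨C, hC⟩
    exact ⟨ENNReal.ofReal C, ofReal_ne_top, fun i => by
      rw [← ofReal_norm]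
      exact ENNReal.ofReal_le_ofReal (hC i)⟩
  · rintro ⟨M, hM, hwM⟩
    exact ⟨M.toReal, fun i => by
      rw [← toReal_enorm]
      exact ENNReal.toReal_mono hM (hwM i)⟩

end Enorm

section SobolevPairs

variable {N : ℕ} {q : ℝ≥0∞} {Ω : Set (EucN N)} {ψ : EucN N → ℝ}

namespace IsTestFun

theorem memLp (h : IsTestFun Ω ψ) (q : ℝ≥0∞) : MemLp ψ q volume :=
  h.1.continuous.memLp_of_hasCompactSupport h.2.1

theorem memLp_gradient (h : IsTestFun Ω ψ) (q : ℝ≥0∞) : MemLp (gradient ψ) q volume :=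
  (continuous_gradient (h.1.of_le (by simp))).memLp_of_hasCompactSupport
    ((h.2.1.fderiv ℝ).comp_left (map_zero _))

theorem const_smul (h : IsTestFun Ω ψ) (c : ℝ) : IsTestFun Ω (c • ψ) :=
  ⟨contDiff_const.smul h.1, h.2.1.smul_left,
    (tsupport_smul_subset_right (fun _ => c) ψ).trans h.2.2⟩

theorem exteriorCutoff_mul {R r : ℝ} (h : IsTestFun Ω ψ) (hr : 0 < r) (hRr : R < r) :
    IsTestFun (Ω \ closure (ball 0 R)) (exteriorCutoff r * ψ) := by
  refine ⟨(contDiff_exteriorCutoff r).mul h.1, h.2.1.mul_left, fun x hx => ⟨?_, fun hxR => ?_⟩⟩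
  · exact h.2.2 (tsupport_mul_subset_right hx)
  · exact tsupport_exteriorCutoff_subset hr (tsupport_mul_subset_left hx)
      (closedBall_subset_ball hRr (closure_ball_subset_closedBall hxR))

end IsTestFun

namespace IsTestPair

theorem const_smul {w : SobPair N q} (h : IsTestPair q Ω w) (c : ℝ) : IsTestPair q Ω (c • w) := by
  obtain ⟨ψ, hψ, hw₁, hw₂⟩ := h
  refine ⟨c • ψ, hψ.const_smul c, (Lp.coeFn_smul c w.1).trans (hw₁.const_smul c), ?_⟩
  filter_upwards [Lp.coeFn_smul c w.2, hw₂] with x hx hx₂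
  rw [gradient_const_smul (hψ.1.differentiable (by simp)), ← hx₂]
  exact hx

end IsTestPair

/-- The pair formed by a test function and its gradient. -/
def IsTestFun.toSobPair (h : IsTestFun Ω ψ) (q : ℝ≥0∞) : SobPair N q :=
  ((h.memLp q).toLp ψ, (h.memLp_gradient q).toLp (gradient ψ))

theorem IsTestFun.isTestPair_toSobPair (h : IsTestFun Ω ψ) (q : ℝ≥0∞) :
    IsTestPair q Ω (h.toSobPair q) :=
  ⟨ψ, h, (h.memLp q).coeFn_toLp, (h.memLp_gradient q).coeFn_toLp⟩

theorem IsTestPair.exists_eq_toSobPair {w : SobPair N q} (h : IsTestPair q Ω w) :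
    ∃ (ψ : EucN N → ℝ) (hψ : IsTestFun Ω ψ), w = hψ.toSobPair q := by
  obtain ⟨ψ, hψ, hw₁, hw₂⟩ := h
  exact ⟨ψ, hψ, Prod.ext (Lp.ext (hw₁.trans (hψ.memLp q).coeFn_toLp.symm))
    (Lp.ext (hw₂.trans (hψ.memLp_gradient q).coeFn_toLp.symm))⟩

variable [Fact (1 ≤ q)]

theorem IsTestFun.eLpNorm_le_enorm_toSobPair (h : IsTestFun Ω ψ) :
    eLpNorm ψ q volume ≤ ‖h.toSobPair q‖ₑ := by
  rw [← Lp.enorm_toLp (hf := h.memLp q), enorm_prod_eq_max]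
  exact le_max_left _ _

theorem IsTestFun.eLpNorm_gradient_le_enorm_toSobPair (h : IsTestFun Ω ψ) :
    eLpNorm (gradient ψ) q volume ≤ ‖h.toSobPair q‖ₑ := by
  rw [← Lp.enorm_toLp (hf := h.memLp_gradient q), enorm_prod_eq_max]
  exact le_max_right _ _

end SobolevPairs

section Poincare

instance fact_one_le_ennreal_ofReal {p : ℝ} [hp : Fact (1 ≤ p)] : Fact (1 ≤ ENNReal.ofReal p) :=
  fact_one_le_ofReal hp.out

variable {N : ℕ} {p : ℝ} [hp : Fact (1 ≤ p)] {Ω Ω' : Set (EucN N)}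

theorem W10_mono (h : Ω ⊆ Ω') : W10 N p hp.out Ω ⊆ W10 N p hp.out Ω' :=
  closure_mono fun _ ⟨ψ, hψ, hw⟩ => ⟨ψ, ⟨hψ.1, hψ.2.1, hψ.2.2.trans h⟩, hw⟩

theorem IsTestPair.mem_W10 {w : SobPair N (ENNReal.ofReal p)}
    (hw : IsTestPair (ENNReal.ofReal p) Ω w) : w ∈ W10 N p hp.out Ω :=
  subset_closure hw

theorem const_smul_mem_W10 {w : SobPair N (ENNReal.ofReal p)} (hw : w ∈ W10 N p hp.out Ω) (c : ℝ) :
    c • w ∈ W10 N p hp.out Ω :=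
  map_mem_closure (continuous_const_smul c) hw fun _ hv => IsTestPair.const_smul hv c

theorem integral_norm_rpow_eq_norm_rpow {α F : Type*} [MeasurableSpace α] {μ : Measure α}
    [NormedAddCommGroup F] (f : Lp F (ENNReal.ofReal p) μ) : ∫ x, ‖f x‖ ^ p ∂μ = ‖f‖ ^ p := by
  have hp₀ : 0 < p := zero_lt_one.trans_le hp.out
  have hint : 0 ≤ ∫ x, ‖f x‖ ^ p ∂μ := by positivity
  rw [Lp.norm_def, (Lp.memLp f).eLpNorm_eq_integral_rpow_norm (by simpa) ofReal_ne_top,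
    ENNReal.toReal_ofReal hp₀.le, ENNReal.toReal_ofReal (by positivity),
    Real.rpow_inv_rpow hint hp₀.ne']

theorem lambda1p_eq_iInf (Ω : Set (EucN N)) :
    lambda1p N p hp.out Ω =
      ⨅ w ∈ {w ∈ W10 N p hp.out Ω | ‖w.1‖ = 1}, ‖w.2‖ₑ ^ p := by
  have hp₀ : 0 < p := zero_lt_one.trans_le hp.out
  rw [lambda1p, ← sInf_image]
  congr 1
  ext t
  have hnorm (w : SobPair N (ENNReal.ofReal p)) : (∫ x, |w.1 x| ^ p) = 1 ↔ ‖w.1‖ = 1 := by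
    simp_rw [← Real.norm_eq_abs]
    rw [integral_norm_rpow_eq_norm_rpow, ← Real.one_rpow p,
      Real.rpow_left_inj (norm_nonneg _) zero_le_one hp₀.ne', Real.one_rpow]
  have hgrad (w : SobPair N (ENNReal.ofReal p)) :
      ENNReal.ofReal (∫ x, ‖w.2 x‖ ^ p) = ‖w.2‖ₑ ^ p := by
    rw [integral_norm_rpow_eq_norm_rpow, ← ENNReal.ofReal_rpow_of_nonneg (norm_nonneg _) hp₀.le,
      ofReal_norm]
  simp [hnorm, hgrad, and_assoc, eq_comm]

theorem lambda1p_mul_enorm_rpow_le {w : SobPair N (ENNReal.ofReal p)}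
    (hw : w ∈ W10 N p hp.out Ω) : lambda1p N p hp.out Ω * ‖w.1‖ₑ ^ p ≤ ‖w.2‖ₑ ^ p := by
  have hp₀ : 0 < p := zero_lt_one.trans_le hp.out
  rcases eq_or_ne w.1 0 with hw₀ | hw₀
  · simp [hw₀, hp₀]
  have hw₁ : ‖w.1‖ ≠ 0 := norm_ne_zero_iff.2 hw₀
  have hunit : lambda1p N p hp.out Ω ≤ ‖‖w.1‖⁻¹ • w.2‖ₑ ^ p := by
    rw [lambda1p_eq_iInf]
    exact iInf₂_le_of_le (‖w.1‖⁻¹ • w)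
      ⟨const_smul_mem_W10 hw _, by simp [norm_smul, hw₁]⟩ le_rfl
  calc lambda1p N p hp.out Ω * ‖w.1‖ₑ ^ p ≤ (‖w.1‖ₑ⁻¹ * ‖w.2‖ₑ) ^ p * ‖w.1‖ₑ ^ p := by
        grw [hunit, enorm_smul, enorm_inv hw₁, enorm_norm]
    _ = ‖w.2‖ₑ ^ p := by
        rw [← ENNReal.mul_rpow_of_nonneg _ _ hp₀.le, mul_right_comm,
          ENNReal.inv_mul_cancel (by simpa using hw₀) enorm_ne_top, one_mul]

end Poincare

section Tightness

variable {N : ℕ} {p : ℝ} [hp : Fact (1 ≤ p)] {Ω : Set (EucN N)}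

theorem exists_lambda1p_mul_eLpNorm_rpow_le (N : ℕ) (p : ℝ) [hp : Fact (1 ≤ p)] :
    ∃ C : NNReal, ∀ (Ω : Set (EucN N)) (w : SobPair N (ENNReal.ofReal p)) (R : ℝ), 0 < R →
      IsTestPair (ENNReal.ofReal p) Ω w →
      lambda1p N p hp.out (Ω \ closure (ball (0 : EucN N) R)) *
        eLpNorm w.1 (ENNReal.ofReal p) (volume.restrict (ball 0 (2 * (R + 1)))ᶜ) ^ p ≤
          (C * ‖w‖ₑ) ^ p := by
  obtain ⟨C, hC⟩ := exists_norm_fderiv_exteriorCutoff_le (EucN N)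
  refine ⟨1 + C, fun Ω w R hR hw => ?_⟩
  obtain ⟨ψ, hψ, rfl⟩ := hw.exists_eq_toSobPair
  have hp₀ : 0 ≤ p := zero_le_one.trans hp.out
  set q := ENNReal.ofReal p
  set η : EucN N → ℝ := exteriorCutoff (R + 1)
  have hη : ContDiff ℝ 1 η := (contDiff_exteriorCutoff _).of_le (by simp)
  have hηψ : IsTestFun (Ω \ closure (ball 0 R)) (η * ψ) :=
    hψ.exteriorCutoff_mul (by positivity) (lt_add_one R)
  have htail : eLpNorm (hψ.toSobPair q).1 q (volume.restrict (ball 0 (2 * (R + 1)))ᶜ) ≤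
      eLpNorm (η * ψ) q volume := by
    refine (eLpNorm_congr_ae ?_).trans_le (eLpNorm_mono_measure _ Measure.restrict_le_self)
    filter_upwards [ae_restrict_of_ae (hψ.memLp q).coeFn_toLp,
      ae_restrict_mem measurableSet_ball.compl] with x hx hxR
    have hηx : η x = 1 := exteriorCutoff_eq_one (by positivity) hxR
    rw [Pi.mul_apply, hηx, one_mul]
    exact hx
  have hgrad : eLpNorm (gradient (η * ψ)) q volume ≤ (1 + C : NNReal) * ‖hψ.toSobPair q‖ₑ := by
    calc eLpNorm (gradient (η * ψ)) q volume
        ≤ eLpNorm (gradient ψ) q volume + C * eLpNorm ψ q volume :=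
          eLpNorm_gradient_mul_le Fact.out hη (hψ.1.of_le (by simp))
            (norm_exteriorCutoff_le_one _) (hC _ (by linarith))
      _ ≤ ‖hψ.toSobPair q‖ₑ + C * ‖hψ.toSobPair q‖ₑ := by
          grw [hψ.eLpNorm_gradient_le_enorm_toSobPair, hψ.eLpNorm_le_enorm_toSobPair]
      _ = (1 + C : NNReal) * ‖hψ.toSobPair q‖ₑ := by
          push_cast
          ring
  grw [htail, ← hgrad]
  simpa [IsTestFun.toSobPair, Lp.enorm_toLp] using
    lambda1p_mul_enorm_rpow_le (hηψ.isTestPair_toSobPair q).mem_W10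

theorem exists_eLpNorm_restrict_compl_ball_le (hΩ : Einfty N p hp.out Ω = ⊤) {M ε : ℝ≥0∞}
    (hM : M ≠ ⊤) (hε : 0 < ε) :
    ∃ R, ∀ w, IsTestPair (ENNReal.ofReal p) Ω w → ‖w‖ₑ ≤ M →
      eLpNorm w.1 (ENNReal.ofReal p) (volume.restrict (ball 0 R)ᶜ) ≤ ε := by
  have hp₀ : 0 < p := zero_lt_one.trans_le hp.out
  obtain ⟨C, hC⟩ := exists_lambda1p_mul_eLpNorm_rpow_le N p
  have hCM : (C * M) ^ p ≠ ⊤ := by finiteness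
  have hε_rpow : ε ^ p ≠ 0 := (ENNReal.rpow_pos_of_nonneg hε hp₀.le).ne'
  have hlt : (C * M) ^ p / ε ^ p < Einfty N p hp.out Ω := hΩ ▸ ENNReal.div_lt_top hCM hε_rpow
  obtain ⟨R, hR, hlt⟩ : ∃ R > 0,
      (C * M) ^ p / ε ^ p < lambda1p N p hp.out (Ω \ closure (ball 0 R)) := by
    simpa [Einfty, lt_iSup_iff] using hlt
  rw [ENNReal.div_lt_iff (Or.inl hε_rpow) (Or.inr hCM)] at hlt
  refine ⟨2 * (R + 1), fun w hw hwM => ?_⟩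
  by_contra! hεw
  refine hlt.not_ge ?_
  grw [hεw, hC Ω w R hR hw, hwM]

end Tightness

section Compactness

variable {N : ℕ} {p : ℝ} [hp : Fact (1 ≤ p)] {Ω : Set (EucN N)}

theorem IsTestPair.eLpNorm_translate_sub_le_mul_enorm {w : SobPair N (ENNReal.ofReal p)}
    (hw : IsTestPair (ENNReal.ofReal p) Ω w) (h : EucN N) :
    eLpNorm (fun x => w.1 (x + h) - w.1 x) (ENNReal.ofReal p) volume ≤ ‖h‖ₑ * ‖w‖ₑ := by
  obtain ⟨ψ, hψ, hw₁, hw₂⟩ := hw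
  have htranslate : (fun x => w.1 (x + h)) =ᵐ[volume] fun x => ψ (x + h) :=
    (measurePreserving_add_right volume h).quasiMeasurePreserving.ae_eq_comp hw₁
  calc eLpNorm (fun x => w.1 (x + h) - w.1 x) (ENNReal.ofReal p) volume
      = eLpNorm (fun x => ψ (x + h) - ψ x) (ENNReal.ofReal p) volume :=
        eLpNorm_congr_ae (htranslate.sub hw₁)
    _ ≤ ‖h‖ₑ * eLpNorm (fderiv ℝ ψ) (ENNReal.ofReal p) volume :=
        eLpNorm_translate_sub_le Fact.out ofReal_ne_top (hψ.1.of_le (by simp)) h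
    _ = ‖h‖ₑ * ‖w.2‖ₑ := by
        rw [Lp.enorm_def, eLpNorm_congr_ae hw₂,
          eLpNorm_congr_norm_ae (.of_forall (norm_gradient ψ))]
    _ ≤ ‖h‖ₑ * ‖w‖ₑ := by
        grw [enorm_prod_eq_max w, ← le_max_right]

theorem totallyBounded_image_fst_testPairs (hΩ : Einfty N p hp.out Ω = ⊤) (r : ℝ) :
    TotallyBounded (Prod.fst '' (ball 0 r ∩ {w | IsTestPair (ENNReal.ofReal p) Ω w})) := by
  have henorm {w : SobPair N (ENNReal.ofReal p)} (hw : w ∈ ball 0 r) : ‖w‖ₑ ≤ ENNReal.ofReal r := by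
    rw [← ofReal_norm]
    exact ENNReal.ofReal_le_ofReal (mem_ball_zero_iff.1 hw).le
  refine totallyBounded_of_tight_of_equicontinuous ofReal_ne_top ?_ (fun ε hε => ?_) fun ε hε => ?_
  · exact (LipschitzWith.prod_fst.isBounded_image isBounded_ball).subset
      (image_mono inter_subset_left)
  · obtain ⟨R, hR⟩ := exists_eLpNorm_restrict_compl_ball_le hΩ (ofReal_ne_top (r := r)) hε
    refine ⟨R, ?_⟩
    rintro _ ⟨w, ⟨hwr, hw⟩, rfl⟩
    exact hR w hw (henorm hwr)
  · have hlim : Tendsto (fun h : EucN N => ‖h‖ₑ * ENNReal.ofReal r) (𝓝 0) (𝓝 0) := by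
      simpa using ENNReal.Tendsto.mul_const (continuous_enorm.tendsto (0 : EucN N))
        (Or.inr (ofReal_ne_top (r := r)))
    obtain ⟨δ, hδ, hδε⟩ := eventually_nhds_iff_ball.1 (hlim.eventually (ge_mem_nhds hε))
    refine ⟨δ, hδ, ?_⟩
    rintro _ ⟨w, ⟨hwr, hw⟩, rfl⟩ h hh
    grw [hw.eLpNorm_translate_sub_le_mul_enorm h, henorm hwr, hδε h hh]

theorem totallyBounded_image_fst_W10 (hΩ : Einfty N p hp.out Ω = ⊤) (r : ℝ) :
    TotallyBounded (Prod.fst '' (ball 0 r ∩ W10 N p hp.out Ω)) :=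
  (totallyBounded_image_fst_testPairs hΩ r).closure.subset <|
    (image_mono isOpen_ball.inter_closure).trans
      (image_closure_subset_closure_image continuous_fst)

theorem compactSobolevEmbedding_iff :
    CompactSobolevEmbedding N p hp.out Ω ↔
      ∀ w : ℕ → SobPair N (ENNReal.ofReal p), (∀ n, w n ∈ W10 N p hp.out Ω) →
        Bornology.IsBounded (range w) →
        ∃ σ : ℕ → ℕ, StrictMono σ ∧
          ∃ u, Tendsto (fun n => (w (σ n)).1) atTop (𝓝 u) := by
  have hbdd (w : ℕ → SobPair N (ENNReal.ofReal p)) : Bornology.IsBounded (range w) ↔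
      ∃ M : ℝ≥0∞, M ≠ ⊤ ∧ ∀ n, eLpNorm (w n).1 (ENNReal.ofReal p) volume ≤ M ∧
        eLpNorm (w n).2 (ENNReal.ofReal p) volume ≤ M := by
    simp only [isBounded_range_iff_exists_enorm_le, enorm_prod_eq_max, max_le_iff, Lp.enorm_def]
  have hlim (f : ℕ → Lp ℝ (ENNReal.ofReal p) (volume : Measure (EucN N))) :
      (∃ u, Tendsto f atTop (𝓝 u)) ↔ ∃ u : EucN N → ℝ, MemLp u (ENNReal.ofReal p) volume ∧
        Tendsto (fun n => eLpNorm (⇑(f n) - u) (ENNReal.ofReal p) volume) atTop (𝓝 0) := by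
    constructor
    · rintro ⟨u, hu⟩
      exact ⟨u, Lp.memLp u, (Lp.tendsto_Lp_iff_tendsto_eLpNorm' _ _).1 hu⟩
    · rintro ⟨u, hu, hfu⟩
      exact ⟨hu.toLp u, (Lp.tendsto_Lp_iff_tendsto_eLpNorm _ _ _).2 hfu⟩
  simp only [CompactSobolevEmbedding, hbdd, hlim]

theorem compactSobolevEmbedding_of_Einfty_eq_top (hΩ : Einfty N p hp.out Ω = ⊤) :
    CompactSobolevEmbedding N p hp.out Ω := by
  refine compactSobolevEmbedding_iff.2 fun w hw hbdd => ?_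
  obtain ⟨r, hr⟩ := hbdd.subset_ball 0
  have hcompact : IsCompact (closure (Prod.fst '' (ball 0 r ∩ W10 N p hp.out Ω))) :=
    (totallyBounded_image_fst_W10 hΩ r).closure.isCompact_of_isClosed isClosed_closure
  obtain ⟨u, -, σ, hσ, hu⟩ := hcompact.tendsto_subseq fun n =>
    subset_closure (mem_image_of_mem Prod.fst ⟨hr (mem_range_self n), hw n⟩)
  exact ⟨σ, hσ, u, hu⟩

end Compactness

section Escape

theorem ae_eq_zero_of_tendsto_Lp {α F : Type*} [MeasurableSpace α] {μ : Measure α}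
    [NormedAddCommGroup F] {q : ℝ≥0∞} [Fact (1 ≤ q)] {f : ℕ → Lp F q μ} {g : Lp F q μ}
    (hf : Tendsto f atTop (𝓝 g)) : ∀ᵐ x ∂μ, (∀ᶠ n in atTop, f n x = 0) → g x = 0 := by
  obtain ⟨σ, hσ, hlim⟩ := (tendstoInMeasure_of_tendsto_Lp hf).exists_seq_tendsto_ae
  filter_upwards [hlim] with x hx hzero
  exact tendsto_nhds_unique (hx.congr' (hσ.tendsto_atTop.eventually hzero)) tendsto_const_nhds

variable {N : ℕ} {p : ℝ} [hp : Fact (1 ≤ p)] {Ω : Set (EucN N)}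

theorem ae_eq_zero_of_mem_W10 {w : SobPair N (ENNReal.ofReal p)} (hw : w ∈ W10 N p hp.out Ω) :
    ∀ᵐ x, x ∉ Ω → w.1 x = 0 := by
  obtain ⟨v, hv, hlim⟩ := mem_closure_iff_seq_limit.1 hw
  have hvanish : ∀ᵐ x, ∀ n, x ∉ Ω → (v n).1 x = 0 := by
    refine ae_all_iff.2 fun n => ?_
    obtain ⟨ψ, hψ, hv₁, -⟩ := hv n
    filter_upwards [hv₁] with x hx hxΩ
    rw [hx, image_eq_zero_of_notMem_tsupport fun h => hxΩ (hψ.2.2 h)]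
  filter_upwards [hvanish, ae_eq_zero_of_tendsto_Lp ((continuous_fst.tendsto w).comp hlim)]
    with x hx hlimx hxΩ
  exact hlimx (.of_forall fun n => hx n hxΩ)

theorem exists_mem_W10_norm_eq_one (hΩ : Einfty N p hp.out Ω ≠ ⊤) {R : ℝ} (hR : 0 < R) :
    ∃ w ∈ W10 N p hp.out (Ω \ closure (ball 0 R)), ‖w.1‖ = 1 ∧
      ‖w.2‖ₑ ^ p < Einfty N p hp.out Ω + 1 := by
  have hlt : lambda1p N p hp.out (Ω \ closure (ball 0 R)) < Einfty N p hp.out Ω + 1 :=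
    (le_iSup₂_of_le R hR le_rfl).trans_lt (ENNReal.lt_add_right hΩ one_ne_zero)
  simpa [lambda1p_eq_iInf, iInf_lt_iff, and_assoc] using hlt

theorem Einfty_eq_top_of_compactSobolevEmbedding (h : CompactSobolevEmbedding N p hp.out Ω) :
    Einfty N p hp.out Ω = ⊤ := by
  have hp₀ : 0 < p := zero_lt_one.trans_le hp.out
  by_contra hΩ
  choose w hw hnorm hgrad using fun n : ℕ =>
    exists_mem_W10_norm_eq_one hΩ (n.cast_add_one_pos (α := ℝ))
  have hbdd : Bornology.IsBounded (range w) := by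
    refine isBounded_range_iff_exists_enorm_le.2
      ⟨max 1 ((Einfty N p hp.out Ω + 1) ^ p⁻¹), by finiteness, fun n => ?_⟩
    rw [enorm_prod_eq_max]
    refine max_le_max ?_ ((ENNReal.le_rpow_inv_iff hp₀).2 (hgrad n).le)
    rw [← ofReal_norm, hnorm, ENNReal.ofReal_one]
  obtain ⟨σ, hσ, u, hu⟩ :=
    compactSobolevEmbedding_iff.1 h w (fun n => W10_mono sdiff_subset (hw n)) hbdd
  have hu₁ : ‖u‖ = 1 := tendsto_nhds_unique hu.norm (by simp [hnorm])
  have hu₀ : u = 0 := by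
    rw [Lp.eq_zero_iff_ae_eq_zero]
    filter_upwards [ae_all_iff.2 fun n => ae_eq_zero_of_mem_W10 (hw n),
      ae_eq_zero_of_tendsto_Lp hu] with x hx hlim
    refine hlim ?_
    filter_upwards [hσ.tendsto_atTop.eventually_ge_atTop ⌈‖x‖⌉₊] with n hn
    refine hx _ fun hxΩ => hxΩ.2 (subset_closure (mem_ball_zero_iff.2 ?_))
    exact (Nat.ceil_le.1 hn).trans_lt (lt_add_one _)
  simp [hu₀] at hu₁

end Escape

theorem statement6_general (N : ℕ) (p : ℝ) (hp : 1 ≤ p) (Ω : Set (EucN N)) :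
    CompactSobolevEmbedding N p hp Ω ↔ Einfty N p hp Ω = ⊤ :=
  have : Fact (1 ≤ p) := ⟨hp⟩
  ⟨Einfty_eq_top_of_compactSobolevEmbedding, compactSobolevEmbedding_of_Einfty_eq_top⟩

theorem statement6 (N : ℕ) (p : ℝ) (hp1 : 1 < p) (Ω : Set (EucN N)) (hΩ : IsOpen Ω) :
    CompactSobolevEmbedding N p hp1.le Ω ↔ Einfty N p hp1.le Ω = ⊤ :=
  statement6_general N p hp1.le Ω

end
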